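/- Let Ω ⊆ ℂ be open, z1, z2 ∈ Ω with z1 ≠ z2, m1, m2 ≥ 1 natural numbers, and let h : ℂ → ℂ be analytic on Ω. Define f(z) = h(z)/((z−z1)^{m1}(z−z2)^{m2}) for z ∈ Ω \ {z1, z2}, and set g1(z) = h(z)/(z−z2)^{m2} (so g1 is analytic near z1 and g1 = (z−z1)^{m1} f) and g2(z) = h(z)/(z−z1)^{m1} (analytic near z2, g2 = (z−z2)^{m2} f). Let z ∈ Ω with z ≠ z1, z ≠ z2, and suppose there exists r > |(z−z1)(z−z2)| such that |(w−z1)(w−z2)| ≥ r for every w ∈ ℂ \ Ω. Then f(z) = Σ_{n=0}^{∞} [b_n(z1,z2)(z−z1) + b_n(z2,z1)(z−z2)]·((z−z1)(z−z2))^n + Σ_{n=0}^{∞} [c_n(z1,z2)(z−z1) + c_n(z2,z1)(z−z2)]·((z−z1)(z−z2))^{−n−1}, where both series converge (the second has only finitely many nonzero terms). -/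

import Mathlib

/-- The two-point Laurent coefficient `b_n(z1,z2)` expressed through `g1` (analytic near `z1`,
with `g1 = (z−z1)^{m1} f`) and `g2` (analytic near `z2`, with `g2 = (z−z2)^{m2} f`).
Here `(a)_k` is the Pochhammer symbol `ascPochhammer`. -/
noncomputable def twoPointLaurentB (g1 g2 : ℂ → ℂ) (z1 z2 : ℂ) (m1 m2 : ℕ) (n : ℕ) : ℂ :=
  (∑ k ∈ Finset.range (n + m1),
      (Nat.choose (n + m1 - 1) k : ℂ) * (-1 : ℂ) ^ (k + 1) *
        Polynomial.eval ((n : ℂ) + 1) (ascPochhammer ℂ k) *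
        iteratedDeriv (n + m1 - k - 1) g1 z1 /
        ((Nat.factorial (n + m1 - 1) : ℂ) * (z1 - z2) ^ (n + k + 2)))
  + (∑ k ∈ Finset.range (n + m2 + 1),
      (Nat.choose (n + m2) k : ℂ) * (-1 : ℂ) ^ k *
        Polynomial.eval (n : ℂ) (ascPochhammer ℂ k) *
        iteratedDeriv (n + m2 - k) g2 z2 /
        ((Nat.factorial (n + m2) : ℂ) * (z2 - z1) ^ (n + k + 1)))

/-- The two-point Laurent coefficient `c_n(z1,z2)`; empty sums (negative upper limit)
are zero, which is automatic from `Finset.range` with truncated subtraction. -/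
noncomputable def twoPointLaurentC (g1 g2 : ℂ → ℂ) (z1 z2 : ℂ) (m1 m2 : ℕ) (n : ℕ) : ℂ :=
  -(∑ k ∈ Finset.range (m1 - n - 1),
      (Nat.factorial k : ℂ) * (Nat.choose (m1 - n - 2) k : ℂ) * (Nat.choose n k : ℂ) *
        (z1 - z2) ^ ((n : ℤ) - k - 1) *
        iteratedDeriv (m1 - n - k - 2) g1 z1 / (Nat.factorial (m1 - n - 2) : ℂ))
  + (∑ k ∈ Finset.range (m2 - n),
      (Nat.factorial k : ℂ) * (Nat.choose (m2 - n - 1) k : ℂ) * (Nat.choose (n + 1) k : ℂ) *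
        (z2 - z1) ^ ((n : ℤ) - k) *
        iteratedDeriv (m2 - n - k - 1) g2 z2 / (Nat.factorial (m2 - n - 1) : ℂ))

/-!
Write `u = (w - z1) * (w - z2)`. Multiplying `f` by `u ^ (m1 + m2)` clears the poles and only shifts
the coefficients, so let `f` be holomorphic on the oval `|u| < r`. With `s = w - (z1 + z2) / 2`, the
variable `u` is `s ^ 2` up to a constant, and splitting `f` into its even and odd parts in `s` gives
`f = A(u) * (w - z1) + B(u) * (w - z2)` with `A` and `B` holomorphic on the disc `|u| < r`. It
remains to expand `A` and `B` in powers of `u`. The coefficient of `u ^ e` in `A` is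
`1 / (z2 - z1)` times the sum of the residues of `f / ((w - z1) ^ e * (w - z2) ^ (e + 1))`: on the
terms with a lower power of `u` this quotient is `O(w ^ (-2))` at infinity, so its residues cancel,
and on those with a higher power it has no pole.
-/

open Finset
open scoped Nat Topology

lemma descPochhammer_eval_neg {R : Type*} [Ring R] (c : R) (k : ℕ) :
    (descPochhammer R k).eval (-c) = (-1) ^ k * (ascPochhammer R k).eval c := by
  rw [← neg_neg c, ascPochhammer_eval_neg_eq_descPochhammer, neg_neg, ← mul_assoc,
    ← (Commute.refl (-1 : R)).mul_pow, neg_one_mul, neg_neg, one_pow, one_mul]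

lemma exists_hasSum_nat_hasSum_neg_sub_one {M : Type*} [AddCommGroup M] [UniformSpace M]
    [IsUniformAddGroup M] [CompleteSpace M] [T2Space M] {t : ℤ → M} {s : M} (ht : HasSum t s) :
    ∃ s₁ s₂ : M, HasSum (fun n : ℕ => t n) s₁ ∧ HasSum (fun n : ℕ => t (-n - 1)) s₂ ∧
      s = s₁ + s₂ := by
  have hinj : Function.Injective fun n : ℕ => (-n - 1 : ℤ) := fun i j hij => by simpa using hij
  obtain ⟨s₁, hs₁⟩ := ht.summable.comp_injective Nat.cast_injective
  obtain ⟨s₂, hs₂⟩ := ht.summable.comp_injective hinj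
  refine ⟨s₁, s₂, hs₁, hs₂, ht.unique (hs₁.of_nat_of_neg_add_one ?_)⟩
  simp only [neg_add']
  exact hs₂

section TaylorCoeff

/-- The coefficient of `(w - a) ^ j` in the Taylor expansion of `g` at `a`. It is indexed by `ℤ`
and vanishes for `j < 0`, so that multiplying `g` by a power of `w - a` is a shift of `j`. -/
noncomputable def taylorCoeff (g : ℂ → ℂ) (a : ℂ) : ℤ → ℂ
  | Int.ofNat n => iteratedDeriv n g a / n !
  | Int.negSucc _ => 0

variable {f g : ℂ → ℂ} {a b : ℂ}

lemma taylorCoeff_natCast (g : ℂ → ℂ) (a : ℂ) (n : ℕ) :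
    taylorCoeff g a n = iteratedDeriv n g a / n ! :=
  rfl

lemma taylorCoeff_of_neg (g : ℂ → ℂ) (a : ℂ) {j : ℤ} (hj : j < 0) : taylorCoeff g a j = 0 := by
  obtain ⟨n, rfl⟩ := Int.eq_negSucc_of_lt_zero hj
  rfl

lemma taylorCoeff_congr (hfg : f =ᶠ[𝓝 a] g) (j : ℤ) : taylorCoeff f a j = taylorCoeff g a j := by
  cases j <;> simp only [taylorCoeff, hfg.iteratedDeriv_eq]

lemma taylorCoeff_add (hf : AnalyticAt ℂ f a) (hg : AnalyticAt ℂ g a) (j : ℤ) :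
    taylorCoeff (fun w => f w + g w) a j = taylorCoeff f a j + taylorCoeff g a j := by
  cases j
  · simp only [taylorCoeff, iteratedDeriv_fun_add hf.contDiffAt hg.contDiffAt, add_div]
  · simp only [taylorCoeff, add_zero]

lemma taylorCoeff_const_mul (c : ℂ) (g : ℂ → ℂ) (a : ℂ) (j : ℤ) :
    taylorCoeff (fun w => c * g w) a j = c * taylorCoeff g a j := by
  cases j
  · simp only [taylorCoeff, iteratedDeriv_const_mul_field, mul_div_assoc]
  · simp only [taylorCoeff, mul_zero]

lemma iteratedDeriv_sub_pow_self (a : ℂ) (n m : ℕ) :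
    iteratedDeriv n (fun w => (w - a) ^ m) a = if n = m then (m ! : ℂ) else 0 := by
  rw [iteratedDeriv_comp_sub_const n (fun w : ℂ => w ^ m) a]
  simp only [sub_self, iteratedDeriv_fun_pow_zero, Nat.cast_ite, Nat.cast_zero]

lemma taylorCoeff_sub_pow_mul (hg : AnalyticAt ℂ g a) (m : ℕ) (j : ℤ) :
    taylorCoeff (fun w => (w - a) ^ m * g w) a j = taylorCoeff g a (j - m) := by
  rcases lt_or_ge j 0 with hj | hj
  · rw [taylorCoeff_of_neg _ _ hj, taylorCoeff_of_neg _ _ (by lia)]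
  lift j to ℕ using hj
  rw [taylorCoeff_natCast, iteratedDeriv_fun_mul (by fun_prop) hg.contDiffAt]
  simp only [iteratedDeriv_sub_pow_self, mul_ite, mul_zero, ite_mul, zero_mul, sum_ite_eq',
    mem_range]
  split_ifs with hmj
  · obtain ⟨i, rfl⟩ := Nat.exists_eq_add_of_le (Nat.lt_succ_iff.1 hmj)
    have hfact : ((m + i)! : ℂ) = (m + i).choose m * m ! * i ! := by
      rw [Nat.choose_symm_add]
      exact_mod_cast (Nat.add_choose_mul_factorial_mul_factorial m i).symm
    have hchoose : ((m + i).choose m : ℂ) ≠ 0 := by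
      exact_mod_cast (Nat.choose_pos (Nat.le_add_right m i)).ne'
    have hm : (m ! : ℂ) ≠ 0 := by exact_mod_cast m.factorial_ne_zero
    rw [Nat.add_sub_cancel_left, Nat.cast_add, add_sub_cancel_left, taylorCoeff_natCast, hfact,
      mul_div_mul_left _ _ (mul_ne_zero hchoose hm)]
  · rw [zero_div, taylorCoeff_of_neg _ _ (by lia)]

lemma analyticAt_sub_zpow (hab : a ≠ b) (e : ℤ) : AnalyticAt ℂ (fun w => (w - b) ^ e) a :=
  (analyticAt_id.sub analyticAt_const).zpow (sub_ne_zero.2 hab)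

lemma iteratedDeriv_sub_zpow (e : ℤ) (n : ℕ) (a b : ℂ) :
    iteratedDeriv n (fun w => (w - b) ^ e) a
      = (descPochhammer ℂ n).eval (e : ℂ) * (a - b) ^ (e - n) := by
  rw [iteratedDeriv_comp_sub_const n (fun w : ℂ => w ^ e) b, iteratedDeriv_eq_iterate,
    descPochhammer_eval_eq_prod_range]
  exact iter_deriv_zpow e (a - b) n

lemma taylorCoeff_mul_sub_zpow (hg : AnalyticAt ℂ g a) (hab : a ≠ b) (e : ℤ) {j : ℤ} {K : ℕ}
    (hK : (j + 1).toNat = K) :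
    taylorCoeff (fun w => g w * (w - b) ^ e) a j
      = ∑ k ∈ range K, ((K - 1).choose k : ℂ) *
          ((descPochhammer ℂ k).eval (e : ℂ) * (a - b) ^ (e - k)) *
          iteratedDeriv (K - 1 - k) g a / (K - 1)! := by
  cases K with
  | zero => rw [range_zero, sum_empty, taylorCoeff_of_neg _ _ (by lia)]
  | succ n =>
    obtain rfl : j = n := by lia
    simp only [mul_comm (g _)]
    rw [taylorCoeff_natCast, iteratedDeriv_fun_mul (analyticAt_sub_zpow hab e).contDiffAt
      hg.contDiffAt, sum_div]
    simp only [iteratedDeriv_sub_zpow, Nat.add_sub_cancel]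

lemma taylorCoeff_mul_sub_zpow_of_eventuallyEq (hg : AnalyticAt ℂ g a) (hab : a ≠ b) {m n : ℕ}
    (hfg : f =ᶠ[𝓝 a] fun w => (w - a) ^ m * (w - b) ^ n * g w) (e j : ℤ) :
    taylorCoeff (fun w => f w * (w - b) ^ e) a j
      = taylorCoeff (fun w => g w * (w - b) ^ (e + n)) a (j - m) := by
  rw [← taylorCoeff_sub_pow_mul (hg.fun_mul (analyticAt_sub_zpow hab _))]
  refine taylorCoeff_congr ?_ j
  filter_upwards [hfg, isOpen_ne.mem_nhds hab] with w hw hwb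
  rw [hw, zpow_add₀ (sub_ne_zero.2 hwb), zpow_natCast]
  ring

lemma taylorCoeff_sub_zpow_neg_succ (p q : ℕ) (a b : ℂ) :
    taylorCoeff (fun w => (w - b) ^ (-(q : ℤ) - 1)) a p
      = (-1) ^ p * ((q + p)! / (q ! * p !)) * (a - b) ^ (-(q + p : ℤ) - 1) := by
  have hq : (q ! : ℂ) ≠ 0 := by exact_mod_cast q.factorial_ne_zero
  have hasc : (ascPochhammer ℂ p).eval (q + 1 : ℂ) = (q + p)! / q ! := by
    rw [eq_div_iff hq, ← Nat.cast_succ, ← ascPochhammer_eval_cast,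
      ascPochhammer_nat_eq_ascFactorial, mul_comm]
    exact_mod_cast Nat.factorial_mul_ascFactorial q p
  rw [taylorCoeff_natCast, iteratedDeriv_sub_zpow,
    show ((-(q : ℤ) - 1 : ℤ) : ℂ) = -((q : ℂ) + 1) by push_cast; ring, descPochhammer_eval_neg,
    hasc, show -(q : ℤ) - 1 - p = -(q + p : ℤ) - 1 by ring]
  ring

/-- The residues of `1 / ((w - a) ^ (p + 1) * (w - b) ^ (q + 1))` at `a` and `b` cancel, because the
function is `O(w ^ (-2))` at infinity. -/
lemma taylorCoeff_sub_zpow_add_swap (a b : ℂ) {p : ℤ} {q : ℕ} (hpq : 0 ≤ p + q) :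
    taylorCoeff (fun w => (w - b) ^ (-(q : ℤ) - 1)) a p
      + taylorCoeff (fun w => (w - a) ^ (-p - 1)) b q = 0 := by
  rcases lt_or_ge p 0 with hp | hp
  · obtain ⟨i, hi⟩ := Int.eq_ofNat_of_zero_le (show 0 ≤ -p - 1 by lia)
    have hiq : i.descFactorial q = 0 := Nat.descFactorial_eq_zero_iff_lt.2 (by lia)
    rw [taylorCoeff_of_neg _ _ hp, taylorCoeff_natCast, iteratedDeriv_sub_zpow, hi,
      Int.cast_natCast, descPochhammer_eval_eq_descFactorial, hiq]
    simp
  lift p to ℕ using hp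
  have hpow : (b - a) ^ (-(p + q : ℤ) - 1) = (-1) ^ (p + q + 1) * (a - b) ^ (-(p + q : ℤ) - 1) := by
    rw [← neg_sub a b, ← neg_one_mul (a - b), mul_zpow]
    congr 1
    rw [show -(p + q : ℤ) - 1 = -((p + q + 1 : ℕ) : ℤ) by push_cast; ring, zpow_neg, zpow_natCast,
      ← inv_pow, inv_neg_one]
  rw [taylorCoeff_sub_zpow_neg_succ, taylorCoeff_sub_zpow_neg_succ, hpow, add_comm q p,
    add_comm (q : ℤ)]
  have hsign : (-1 : ℂ) ^ q * (-1) ^ (p + q + 1) = -(-1) ^ p := by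
    rw [← pow_add, show q + (p + q + 1) = p + 1 + 2 * q by ring, pow_add, pow_mul]
    simp [pow_succ]
  linear_combination ((p + q)! / (p ! * q !) : ℂ) * (a - b) ^ (-(p + q : ℤ) - 1) * hsign

lemma exists_analyticAt_eq_add_mul (hg : AnalyticAt ℂ g a) :
    ∃ g' : ℂ → ℂ, AnalyticAt ℂ g' a ∧ ∀ w, g w = g a + (w - a) * g' w := by
  obtain ⟨p, hp⟩ := hg
  refine ⟨dslope g a, ⟨_, hp.has_fpower_series_dslope_fslope⟩, fun w => ?_⟩
  rw [← smul_eq_mul, sub_smul_dslope, add_sub_cancel]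

lemma taylorCoeff_succ (hf : AnalyticAt ℂ f a) {c : ℂ} (hg : ∀ w, g w = c + (w - a) * f w) (n : ℕ) :
    taylorCoeff g a (n + 1) = taylorCoeff f a n := by
  have hshift := taylorCoeff_sub_pow_mul hf 1 (n + 1)
  simp only [pow_one, Nat.cast_one, add_sub_cancel_right] at hshift
  rw [funext hg, taylorCoeff_add analyticAt_const (by fun_prop), hshift, ← Nat.cast_succ,
    taylorCoeff_natCast, iteratedDeriv_const]
  simp

lemma hasSum_taylorCoeff_mul_zpow {r : ℝ} (hg : DifferentiableOn ℂ g (Metric.ball a r)) {w : ℂ}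
    (hw : w ∈ Metric.ball a r) :
    HasSum (fun e : ℤ => taylorCoeff g a e * (w - a) ^ e) (g w) := by
  refine (Nat.cast_injective.hasSum_iff fun e he => ?_).1 ?_
  · rw [taylorCoeff_of_neg, zero_mul]
    by_contra! hpos
    exact he ⟨e.toNat, Int.toNat_of_nonneg hpos⟩
  · convert! Complex.hasSum_taylorSeries_on_ball hg hw using 2 with n
    simp only [Function.comp_apply, taylorCoeff_natCast, zpow_natCast, smul_eq_mul]
    ring

end TaylorCoeff

section TwoPointCoeff

/-- The coefficient of `(w - z1) * ((w - z1) * (w - z2)) ^ e` in the two-point Laurent expansion of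
`f`, where `g1 = (w - z1) ^ m1 * f` near `z1` and `g2 = (w - z2) ^ m2 * f` near `z2`. It is
`1 / (z2 - z1)` times the sum of the residues of `f / ((w - z1) ^ e * (w - z2) ^ (e + 1))` at `z1`
and `z2`; the coefficient of `(w - z2) * ((w - z1) * (w - z2)) ^ e` is obtained by exchanging the
indices `1` and `2`. -/
noncomputable def twoPointCoeff (g1 g2 : ℂ → ℂ) (z1 z2 : ℂ) (m1 m2 : ℕ) (e : ℤ) : ℂ :=
  (taylorCoeff (fun w => g1 w * (w - z2) ^ (-e - 1)) z1 (e + m1 - 1)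
    + taylorCoeff (fun w => g2 w * (w - z1) ^ (-e)) z2 (e + m2)) / (z2 - z1)

variable {z1 z2 : ℂ}

lemma twoPointLaurentB_eq_twoPointCoeff {g1 g2 : ℂ → ℂ} (h12 : z1 ≠ z2) (hg1 : AnalyticAt ℂ g1 z1)
    (hg2 : AnalyticAt ℂ g2 z2) (m1 m2 n : ℕ) :
    twoPointLaurentB g1 g2 z1 z2 m1 m2 n = twoPointCoeff g1 g2 z1 z2 m1 m2 n := by
  have hd : z1 - z2 ≠ 0 := sub_ne_zero.2 h12
  have hd' : z2 - z1 ≠ 0 := sub_ne_zero.2 h12.symm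
  unfold twoPointLaurentB twoPointCoeff
  rw [taylorCoeff_mul_sub_zpow (K := n + m1) hg1 h12 _ (by lia),
    taylorCoeff_mul_sub_zpow (K := n + m2 + 1) hg2 h12.symm _ (by lia), add_div, sum_div, sum_div]
  congr 1
  · refine sum_congr rfl fun k _ => ?_
    rw [show ((-(n : ℤ) - 1 : ℤ) : ℂ) = -((n : ℂ) + 1) by push_cast; ring, descPochhammer_eval_neg,
      show -(n : ℤ) - 1 - k = -((n + k + 1 : ℕ) : ℤ) by push_cast; ring, zpow_neg, zpow_natCast,
      Nat.sub_right_comm, ← neg_sub z1 z2]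
    have hfact : ((n + m1 - 1)! : ℂ) ≠ 0 := by exact_mod_cast Nat.factorial_ne_zero _
    field_simp
    ring
  · refine sum_congr rfl fun k _ => ?_
    rw [show ((-(n : ℤ) : ℤ) : ℂ) = -(n : ℂ) by push_cast; ring, descPochhammer_eval_neg,
      show -(n : ℤ) - k = -((n + k : ℕ) : ℤ) by push_cast; ring, zpow_neg, zpow_natCast,
      Nat.add_sub_cancel]
    have hfact : ((n + m2)! : ℂ) ≠ 0 := by exact_mod_cast Nat.factorial_ne_zero _
    field_simp
    ring

lemma twoPointLaurentC_eq_twoPointCoeff {g1 g2 : ℂ → ℂ} (h12 : z1 ≠ z2) (hg1 : AnalyticAt ℂ g1 z1)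
    (hg2 : AnalyticAt ℂ g2 z2) (m1 m2 n : ℕ) :
    twoPointLaurentC g1 g2 z1 z2 m1 m2 n = twoPointCoeff g1 g2 z1 z2 m1 m2 (-(n + 1)) := by
  have hd : z1 - z2 ≠ 0 := sub_ne_zero.2 h12
  have hd' : z2 - z1 ≠ 0 := sub_ne_zero.2 h12.symm
  have hdesc (i k : ℕ) : (descPochhammer ℂ k).eval (i : ℂ) = k ! * i.choose k := by
    rw [descPochhammer_eval_eq_descFactorial]
    exact_mod_cast Nat.descFactorial_eq_factorial_mul_choose i k
  unfold twoPointLaurentC twoPointCoeff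
  rw [taylorCoeff_mul_sub_zpow (K := m1 - n - 1) hg1 h12 _ (by lia),
    taylorCoeff_mul_sub_zpow (K := m2 - n) hg2 h12.symm _ (by lia), add_div, sum_div, sum_div,
    ← sum_neg_distrib]
  congr 1
  · refine sum_congr rfl fun k _ => ?_
    rw [show - -((n : ℤ) + 1) - 1 = n by ring, Int.cast_natCast, hdesc,
      show m1 - n - k - 2 = m1 - n - 1 - 1 - k by lia, show m1 - n - 2 = m1 - n - 1 - 1 by lia,
      zpow_sub_one₀ hd, ← neg_sub z1 z2]
    field_simp
  · refine sum_congr rfl fun k _ => ?_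
    rw [show - -((n : ℤ) + 1) = (n + 1 : ℕ) by push_cast; ring, Int.cast_natCast, hdesc,
      show m2 - n - k - 1 = m2 - n - 1 - k by lia,
      show ((n + 1 : ℕ) : ℤ) - k = n - k + 1 by push_cast; ring, zpow_add_one₀ hd']
    field_simp

lemma twoPointCoeff_of_neg (g1 g2 : ℂ → ℂ) (z1 z2 : ℂ) {m1 m2 : ℕ} {e : ℤ} (he1 : e + m1 ≤ 0)
    (he2 : e + m2 < 0) : twoPointCoeff g1 g2 z1 z2 m1 m2 e = 0 := by
  rw [twoPointCoeff, taylorCoeff_of_neg _ _ (by lia), taylorCoeff_of_neg _ _ he2, add_zero,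
    zero_div]

lemma twoPointCoeff_add {f1 f2 g1 g2 : ℂ → ℂ} (h12 : z1 ≠ z2) (hf1 : AnalyticAt ℂ f1 z1)
    (hf2 : AnalyticAt ℂ f2 z2) (hg1 : AnalyticAt ℂ g1 z1) (hg2 : AnalyticAt ℂ g2 z2)
    (m1 m2 : ℕ) (e : ℤ) :
    twoPointCoeff (fun w => f1 w + g1 w) (fun w => f2 w + g2 w) z1 z2 m1 m2 e
      = twoPointCoeff f1 f2 z1 z2 m1 m2 e + twoPointCoeff g1 g2 z1 z2 m1 m2 e := by
  have hpow1 := analyticAt_sub_zpow h12 (-e - 1)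
  have hpow2 := analyticAt_sub_zpow h12.symm (-e)
  simp only [twoPointCoeff, add_mul]
  rw [taylorCoeff_add (hf1.fun_mul hpow1) (hg1.fun_mul hpow1),
    taylorCoeff_add (hf2.fun_mul hpow2) (hg2.fun_mul hpow2)]
  ring

lemma twoPointCoeff_const_mul (c : ℂ) (g1 g2 : ℂ → ℂ) (z1 z2 : ℂ) (m1 m2 : ℕ) (e : ℤ) :
    twoPointCoeff (fun w => c * g1 w) (fun w => c * g2 w) z1 z2 m1 m2 e
      = c * twoPointCoeff g1 g2 z1 z2 m1 m2 e := by
  simp only [twoPointCoeff, mul_assoc, taylorCoeff_const_mul]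
  ring

/-- If `g1`, `g2` represent `f` with pole orders `m1`, `m2`, then `G1`, `G2` represent
`((w - z1) * (w - z2)) ^ N * f` with pole orders `n1`, `n2`. -/
lemma twoPointCoeff_of_eventuallyEq_pow_mul {g1 g2 G1 G2 : ℂ → ℂ} (h12 : z1 ≠ z2)
    (hg1 : AnalyticAt ℂ g1 z1) (hg2 : AnalyticAt ℂ g2 z2) {m1 m2 n1 n2 k1 k2 N : ℕ}
    (hk1 : m1 + k1 = n1 + N) (hk2 : m2 + k2 = n2 + N)
    (hG1 : G1 =ᶠ[𝓝 z1] fun w => (w - z1) ^ k1 * (w - z2) ^ N * g1 w)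
    (hG2 : G2 =ᶠ[𝓝 z2] fun w => (w - z2) ^ k2 * (w - z1) ^ N * g2 w) (e : ℤ) :
    twoPointCoeff G1 G2 z1 z2 n1 n2 e = twoPointCoeff g1 g2 z1 z2 m1 m2 (e - N) := by
  rw [twoPointCoeff, twoPointCoeff, taylorCoeff_mul_sub_zpow_of_eventuallyEq hg1 h12 hG1,
    taylorCoeff_mul_sub_zpow_of_eventuallyEq hg2 h12.symm hG2,
    show -e - 1 + N = -(e - N) - 1 by ring, show -e + N = -(e - N) by ring,
    show e + n1 - 1 - k1 = e - N + m1 - 1 by lia, show e + n2 - k2 = e - N + m2 by lia]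

lemma twoPointCoeff_sub_pow_mul_sub_pow (h12 : z1 ≠ z2) {p q e : ℕ} (hqe : q ≤ e)
    (hpqe : p + q < 2 * e) :
    twoPointCoeff (fun w => (w - z1) ^ p * (w - z2) ^ q) (fun w => (w - z1) ^ p * (w - z2) ^ q)
      z1 z2 0 0 e = 0 := by
  have hres := taylorCoeff_sub_zpow_add_swap z1 z2 (p := e - 1 - p) (q := e - q) (by lia)
  rw [twoPointCoeff,
    taylorCoeff_mul_sub_zpow_of_eventuallyEq (g := fun _ => 1) (m := p) (n := q) analyticAt_const
      h12 (.of_forall fun w => by ring),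
    taylorCoeff_mul_sub_zpow_of_eventuallyEq (g := fun _ => 1) (m := q) (n := p) analyticAt_const
      h12.symm (.of_forall fun w => by ring)]
  simp only [one_mul]
  rw [show -(e : ℤ) - 1 + q = -((e - q : ℕ) : ℤ) - 1 by lia,
    show (e : ℤ) + (0 : ℕ) - 1 - p = e - 1 - p by lia, show -(e : ℤ) + p = -(e - 1 - p) - 1 by ring,
    show (e : ℤ) + (0 : ℕ) - q = (e - q : ℕ) by lia, hres, zero_div]

lemma analyticAt_comp_mul_add_comp_mul {A B : ℂ → ℂ} (hA : AnalyticAt ℂ A 0)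
    (hB : AnalyticAt ℂ B 0) {x : ℂ} (hx : (x - z1) * (x - z2) = 0) :
    AnalyticAt ℂ
      (fun w => A ((w - z1) * (w - z2)) * (w - z1) + B ((w - z1) * (w - z2)) * (w - z2)) x := by
  have hu : AnalyticAt ℂ (fun w => (w - z1) * (w - z2)) x := by fun_prop
  have hAu : AnalyticAt ℂ (fun w => A ((w - z1) * (w - z2))) x :=
    AnalyticAt.fun_comp (by rwa [hx]) hu
  have hBu : AnalyticAt ℂ (fun w => B ((w - z1) * (w - z2))) x :=
    AnalyticAt.fun_comp (by rwa [hx]) hu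
  exact (hAu.fun_mul (by fun_prop)).fun_add (hBu.fun_mul (by fun_prop))

theorem twoPointCoeff_comp_mul_add_comp_mul {A B : ℂ → ℂ} (h12 : z1 ≠ z2) (hA : AnalyticAt ℂ A 0)
    (hB : AnalyticAt ℂ B 0) {H : ℂ → ℂ}
    (hH : ∀ w, H w = A ((w - z1) * (w - z2)) * (w - z1) + B ((w - z1) * (w - z2)) * (w - z2))
    (e : ℤ) : twoPointCoeff H H z1 z2 0 0 e = taylorCoeff A 0 e := by
  rcases lt_or_ge e 0 with he | he
  · rw [taylorCoeff_of_neg _ _ he, twoPointCoeff_of_neg _ _ _ _ (by lia) (by lia)]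
  lift e to ℕ using he
  induction e generalizing A B H with
  | zero =>
    have hd : z2 - z1 ≠ 0 := sub_ne_zero.2 h12.symm
    have hH2 : taylorCoeff (fun w => H w * (w - z1) ^ (-((0 : ℕ) : ℤ))) z2 (0 : ℕ)
        = A 0 * (z2 - z1) := by
      rw [taylorCoeff_natCast]
      simp [hH]
    rw [twoPointCoeff, taylorCoeff_of_neg _ _ (by simp), ← Nat.cast_add, hH2, zero_add,
      mul_div_cancel_right₀ _ hd, taylorCoeff_natCast]
    simp
  | succ n ih =>
    obtain ⟨A', hA', hAA'⟩ := exists_analyticAt_eq_add_mul hA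
    obtain ⟨B', hB', hBB'⟩ := exists_analyticAt_eq_add_mul hB
    let H' : ℂ → ℂ := fun w =>
      A' ((w - z1) * (w - z2)) * (w - z1) + B' ((w - z1) * (w - z2)) * (w - z2)
    have hH1 : AnalyticAt ℂ H' z1 := analyticAt_comp_mul_add_comp_mul hA' hB' (by simp)
    have hH2 : AnalyticAt ℂ H' z2 := analyticAt_comp_mul_add_comp_mul hA' hB' (by simp)
    have hsplit : H = fun w => A 0 * ((w - z1) ^ 1 * (w - z2) ^ 0)
        + B 0 * ((w - z1) ^ 0 * (w - z2) ^ 1) + (w - z1) * (w - z2) * H' w := by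
      funext w
      rw [hH, hAA', hBB']
      ring
    have hshift : twoPointCoeff (fun w => (w - z1) * (w - z2) * H' w)
        (fun w => (w - z1) * (w - z2) * H' w) z1 z2 0 0 (n + 1 : ℕ)
        = twoPointCoeff H' H' z1 z2 0 0 ((n + 1 : ℕ) - (1 : ℕ)) :=
      twoPointCoeff_of_eventuallyEq_pow_mul h12 hH1 hH2 (k1 := 1) (k2 := 1) rfl rfl
        (.of_forall fun w => by ring) (.of_forall fun w => by ring) _
    rw [hsplit, twoPointCoeff_add h12 (by fun_prop) (by fun_prop) (by fun_prop) (by fun_prop),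
      twoPointCoeff_add h12 (by fun_prop) (by fun_prop) (by fun_prop) (by fun_prop),
      twoPointCoeff_const_mul, twoPointCoeff_const_mul,
      twoPointCoeff_sub_pow_mul_sub_pow h12 (by lia) (by lia),
      twoPointCoeff_sub_pow_mul_sub_pow h12 (by lia) (by lia), hshift, Nat.cast_succ, Nat.cast_one,
      add_sub_cancel_right, ih hA' hB' (H := H') (fun _ => rfl), taylorCoeff_succ hA' hAA']
    ring

end TwoPointCoeff

section Decomposition

/-- The square root is only locally holomorphic, but its two branches give the same value of `E`. -/
lemma exists_differentiableOn_comp_sq_of_even {U : Set ℂ} (hU : IsOpen U) {E : ℂ → ℂ}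
    (hE : DifferentiableOn ℂ E {s | s ^ 2 ∈ U}) (heven : E.Even) :
    ∃ A : ℂ → ℂ, DifferentiableOn ℂ A U ∧ ∀ s, A (s ^ 2) = E s := by
  have hsqrt (v : ℂ) : (v ^ (2⁻¹ : ℂ)) ^ 2 = v := Complex.cpow_nat_inv_pow v two_ne_zero
  have hE_eq {s t : ℂ} (hst : s ^ 2 = t ^ 2) : E s = E t := by
    rcases sq_eq_sq_iff_eq_or_eq_neg.1 hst with rfl | rfl
    exacts [rfl, heven t]
  have hE_at {s : ℂ} (hs : s ^ 2 ∈ U) : DifferentiableAt ℂ E s :=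
    hE.differentiableAt ((hU.preimage (continuous_pow 2)).mem_nhds hs)
  let A : ℂ → ℂ := fun v => E (v ^ (2⁻¹ : ℂ))
  have hA_ne {v : ℂ} (hv : v ∈ U) (hv0 : v ≠ 0) : DifferentiableAt ℂ A v := by
    let branch : ℂ → ℂ := fun x => v ^ (2⁻¹ : ℂ) * (x / v) ^ (2⁻¹ : ℂ)
    have hbranch_sq (x : ℂ) : branch x ^ 2 = x := by
      rw [mul_pow, hsqrt, hsqrt, mul_div_cancel₀ _ hv0]
    have hbranch : DifferentiableAt ℂ branch v :=
      ((differentiableAt_id.div_const v).cpow_const (by simp [hv0])).const_mul _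
    have hA_branch : A = E ∘ branch := by
      funext x
      exact hE_eq ((hsqrt x).trans (hbranch_sq x).symm)
    rw [hA_branch]
    exact (hE_at ((hbranch_sq v).symm ▸ hv)).comp v hbranch
  have hA_cont (h0 : (0 : ℂ) ∈ U) : ContinuousAt A 0 :=
    ContinuousAt.comp (g := E) (hE_at (by rwa [hsqrt])).continuousAt
      (Complex.continuousAt_cpow_const_of_re_pos (by simp) (by norm_num))
  refine ⟨A, ?_, fun s => hE_eq (hsqrt _)⟩
  by_cases h0 : (0 : ℂ) ∈ U
  · exact (Complex.differentiableOn_compl_singleton_and_continuousAt_iff (hU.mem_nhds h0)).1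
      ⟨fun v hv => (hA_ne hv.1 hv.2).differentiableWithinAt, hA_cont h0⟩
  · exact fun v hv => (hA_ne hv (ne_of_mem_of_not_mem hv h0)).differentiableWithinAt

lemma exists_differentiableOn_mul_comp_sq_of_odd {U : Set ℂ} (hU : IsOpen U) {O : ℂ → ℂ}
    (hO : DifferentiableOn ℂ O {s | s ^ 2 ∈ U}) (hodd : O.Odd) :
    ∃ B : ℂ → ℂ, DifferentiableOn ℂ B U ∧ ∀ s, s * B (s ^ 2) = O s := by
  have hO0 : O 0 = 0 := by
    have := hodd 0
    rw [neg_zero] at this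
    exact self_eq_neg.1 this
  have hslope (s : ℂ) : s * dslope O 0 s = O s := by
    simpa [hO0] using sub_smul_dslope O 0 s
  have hslope_diff : DifferentiableOn ℂ (dslope O 0) {s | s ^ 2 ∈ U} := by
    by_cases h0 : (0 : ℂ) ∈ {s : ℂ | s ^ 2 ∈ U}
    · exact (Complex.differentiableOn_dslope
        ((hU.preimage (continuous_pow 2)).mem_nhds h0)).2 hO
    · exact (differentiableOn_dslope_of_notMem h0).2 hO
  have hslope_even : (dslope O 0).Even := by
    intro s
    rcases eq_or_ne s 0 with rfl | hs
    · rw [neg_zero]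
    · refine mul_left_cancel₀ hs ?_
      linear_combination -hslope (-s) - hslope s - hodd s
  obtain ⟨B, hB, hBslope⟩ := exists_differentiableOn_comp_sq_of_even hU hslope_diff hslope_even
  exact ⟨B, hB, fun s => by rw [hBslope, hslope]⟩

lemma exists_differentiableOn_comp_sq_add_mul_comp_sq {U : Set ℂ} (hU : IsOpen U) {F : ℂ → ℂ}
    (hF : DifferentiableOn ℂ F {s | s ^ 2 ∈ U}) :
    ∃ A B : ℂ → ℂ, DifferentiableOn ℂ A U ∧ DifferentiableOn ℂ B U ∧
      ∀ s, F s = A (s ^ 2) + s * B (s ^ 2) := by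
  have hFneg : DifferentiableOn ℂ (fun s => F (-s)) {s | s ^ 2 ∈ U} :=
    hF.comp (by fun_prop) fun s hs => by simpa using hs
  obtain ⟨A, hA, hAF⟩ := exists_differentiableOn_comp_sq_of_even hU
    (E := fun s => (F s + F (-s)) / 2) ((hF.add hFneg).div_const 2)
    fun s => by simp only [neg_neg, add_comm]
  obtain ⟨B, hB, hBF⟩ := exists_differentiableOn_mul_comp_sq_of_odd hU
    (O := fun s => (F s - F (-s)) / 2) ((hF.sub hFneg).div_const 2)
    fun s => by simp only [neg_neg]; ring
  exact ⟨A, B, hA, hB, fun s => by rw [hAF, hBF]; ring⟩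

lemma exists_differentiableOn_comp_mul_add_comp_mul {z1 z2 : ℂ} (h12 : z1 ≠ z2) {U : Set ℂ}
    (hU : IsOpen U) {h : ℂ → ℂ} (hh : DifferentiableOn ℂ h {w | (w - z1) * (w - z2) ∈ U}) :
    ∃ A B : ℂ → ℂ, DifferentiableOn ℂ A U ∧ DifferentiableOn ℂ B U ∧
      ∀ w, h w = A ((w - z1) * (w - z2)) * (w - z1) + B ((w - z1) * (w - z2)) * (w - z2) := by
  have hd : z2 - z1 ≠ 0 := sub_ne_zero.2 h12.symm
  let c : ℂ := (z1 + z2) / 2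
  let d : ℂ := ((z1 - z2) / 2) ^ 2
  have hcentre (s : ℂ) : (s + c - z1) * (s + c - z2) = s ^ 2 - d := by ring
  have hF : DifferentiableOn ℂ (fun s => h (s + c)) {s | s ^ 2 ∈ (· - d) ⁻¹' U} :=
    hh.comp (by fun_prop) fun s hs => by rw [Set.mem_ofPred_eq, hcentre]; exact hs
  obtain ⟨A, B, hA, hB, hAB⟩ := exists_differentiableOn_comp_sq_add_mul_comp_sq
    (hU.preimage (continuous_sub_right d)) hF
  have hmaps : Set.MapsTo (· + d) U ((· - d) ⁻¹' U) := fun v hv => by simpa using hv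
  have hAd : DifferentiableOn ℂ (fun v => A (v + d)) U := hA.comp (by fun_prop) hmaps
  have hBd : DifferentiableOn ℂ (fun v => B (v + d)) U := hB.comp (by fun_prop) hmaps
  refine ⟨fun v => B (v + d) / 2 + A (v + d) / (z2 - z1),
    fun v => B (v + d) / 2 - A (v + d) / (z2 - z1),
    (hBd.div_const 2).add (hAd.div_const _), (hBd.div_const 2).sub (hAd.div_const _), fun w => ?_⟩
  have hw : h w = A ((w - c) ^ 2) + (w - c) * B ((w - c) ^ 2) := by simpa using hAB (w - c)
  have hsq : (w - z1) * (w - z2) + d = (w - c) ^ 2 := by ring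
  have hmid : w - c = ((w - z1) + (w - z2)) / 2 := by ring
  simp only [hsq, hw]
  field_simp
  linear_combination 2 * (z2 - z1) * B ((w - c) ^ 2) * hmid

end Decomposition

section Expansion

variable {z1 z2 : ℂ}

lemma hasSum_twoPointCoeff_of_differentiableOn (h12 : z1 ≠ z2) {H : ℂ → ℂ} {r : ℝ}
    (hH : DifferentiableOn ℂ H {w | ‖(w - z1) * (w - z2)‖ < r}) {z : ℂ}
    (hz : ‖(z - z1) * (z - z2)‖ < r) :
    HasSum (fun e : ℤ => (twoPointCoeff H H z1 z2 0 0 e * (z - z1)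
      + twoPointCoeff H H z2 z1 0 0 e * (z - z2)) * ((z - z1) * (z - z2)) ^ e) (H z) := by
  obtain ⟨A, B, hA, hB, hAB⟩ := exists_differentiableOn_comp_mul_add_comp_mul h12
    (Metric.isOpen_ball (x := (0 : ℂ)) (ε := r)) (h := H)
    (by simpa only [mem_ball_zero_iff] using hH)
  have hBA (w : ℂ) :
      H w = B ((w - z2) * (w - z1)) * (w - z2) + A ((w - z2) * (w - z1)) * (w - z1) := by
    rw [hAB, mul_comm (w - z2), add_comm]
  have hball : Metric.ball (0 : ℂ) r ∈ 𝓝 0 :=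
    Metric.ball_mem_nhds _ ((norm_nonneg _).trans_lt hz)
  have hA0 := hA.analyticAt hball
  have hB0 := hB.analyticAt hball
  have hu : (z - z1) * (z - z2) ∈ Metric.ball 0 r := mem_ball_zero_iff.2 hz
  have hsum := ((hasSum_taylorCoeff_mul_zpow hA hu).mul_right (z - z1)).add
    ((hasSum_taylorCoeff_mul_zpow hB hu).mul_right (z - z2))
  rw [← hAB] at hsum
  convert! hsum using 2 with e
  rw [twoPointCoeff_comp_mul_add_comp_mul h12 hA0 hB0 hAB,
    twoPointCoeff_comp_mul_add_comp_mul h12.symm hB0 hA0 hBA, sub_zero]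
  ring

lemma analyticAt_of_differentiableOn_norm_mul_lt {h : ℂ → ℂ} {r : ℝ} (hr : 0 < r)
    (hh : DifferentiableOn ℂ h {w | ‖(w - z1) * (w - z2)‖ < r}) {x : ℂ}
    (hx : (x - z1) * (x - z2) = 0) : AnalyticAt ℂ h x :=
  hh.analyticAt ((isOpen_lt (by fun_prop) continuous_const).mem_nhds
    (by rwa [Set.mem_ofPred_eq, hx, norm_zero]))

lemma analyticAt_div_sub_pow {h : ℂ → ℂ} {a b : ℂ} (hh : AnalyticAt ℂ h a) (hab : a ≠ b) (m : ℕ) :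
    AnalyticAt ℂ (fun w => h w / (w - b) ^ m) a :=
  hh.fun_div (by fun_prop) (pow_ne_zero m (sub_ne_zero.2 hab))

lemma twoPointCoeff_div_pow {h : ℂ → ℂ} (h12 : z1 ≠ z2) (hh1 : AnalyticAt ℂ h z1)
    (hh2 : AnalyticAt ℂ h z2) (m1 m2 : ℕ) {H : ℂ → ℂ}
    (hH : ∀ w, H w = h w * ((w - z1) ^ m2 * (w - z2) ^ m1)) (e : ℤ) :
    twoPointCoeff H H z1 z2 0 0 (e + (m1 + m2 : ℕ))
      = twoPointCoeff (fun w => h w / (w - z2) ^ m2) (fun w => h w / (w - z1) ^ m1)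
          z1 z2 m1 m2 e := by
  have hH1 : H =ᶠ[𝓝 z1] fun w => (w - z1) ^ m2 * (w - z2) ^ (m1 + m2) * (h w / (w - z2) ^ m2) := by
    filter_upwards [isOpen_ne.mem_nhds h12] with w hw
    rw [hH, pow_add]
    field_simp
  have hH2 : H =ᶠ[𝓝 z2] fun w => (w - z2) ^ m1 * (w - z1) ^ (m1 + m2) * (h w / (w - z1) ^ m1) := by
    filter_upwards [isOpen_ne.mem_nhds h12.symm] with w hw
    rw [hH, pow_add]
    field_simp
  rw [twoPointCoeff_of_eventuallyEq_pow_mul h12 (analyticAt_div_sub_pow hh1 h12 m2)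
    (analyticAt_div_sub_pow hh2 h12.symm m1) (m1 := m1) (m2 := m2) (by lia) (by lia) hH1 hH2,
    add_sub_cancel_right]

theorem hasSum_twoPointCoeff {h : ℂ → ℂ} (h12 : z1 ≠ z2) {r : ℝ}
    (hh : DifferentiableOn ℂ h {w | ‖(w - z1) * (w - z2)‖ < r}) (m1 m2 : ℕ) {z : ℂ}
    (hz1 : z ≠ z1) (hz2 : z ≠ z2) (hz : ‖(z - z1) * (z - z2)‖ < r) :
    HasSum (fun e : ℤ =>
      (twoPointCoeff (fun w => h w / (w - z2) ^ m2) (fun w => h w / (w - z1) ^ m1)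
          z1 z2 m1 m2 e * (z - z1)
        + twoPointCoeff (fun w => h w / (w - z1) ^ m1) (fun w => h w / (w - z2) ^ m2)
          z2 z1 m2 m1 e * (z - z2)) * ((z - z1) * (z - z2)) ^ e)
      (h z / ((z - z1) ^ m1 * (z - z2) ^ m2)) := by
  have hd1 : z - z1 ≠ 0 := sub_ne_zero.2 hz1
  have hd2 : z - z2 ≠ 0 := sub_ne_zero.2 hz2
  have hr : 0 < r := (norm_nonneg _).trans_lt hz
  have hh1 : AnalyticAt ℂ h z1 := analyticAt_of_differentiableOn_norm_mul_lt hr hh (by simp)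
  have hh2 : AnalyticAt ℂ h z2 := analyticAt_of_differentiableOn_norm_mul_lt hr hh (by simp)
  let N : ℤ := (m1 + m2 : ℕ)
  let H : ℂ → ℂ := fun w => h w * ((w - z1) ^ m2 * (w - z2) ^ m1)
  have hH : DifferentiableOn ℂ H {w | ‖(w - z1) * (w - z2)‖ < r} := hh.fun_mul (by fun_prop)
  have hsum := ((Equiv.addRight N).hasSum_iff.2
    (hasSum_twoPointCoeff_of_differentiableOn h12 hH hz)).mul_right (((z - z1) * (z - z2)) ^ (-N))
  have hvalue : H z * ((z - z1) * (z - z2)) ^ (-N) = h z / ((z - z1) ^ m1 * (z - z2) ^ m2) := by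
    rw [zpow_neg, zpow_natCast, mul_pow, pow_add, pow_add]
    simp only [H]
    field_simp
  rw [hvalue] at hsum
  convert! hsum using 2 with e
  simp only [Function.comp_apply, Equiv.coe_addRight]
  rw [mul_assoc _ (_ ^ _), ← zpow_add₀ (mul_ne_zero hd1 hd2), add_neg_cancel_right,
    twoPointCoeff_div_pow h12 hh1 hh2 m1 m2 (fun _ => rfl), show N = (m2 + m1 : ℕ) by lia,
    twoPointCoeff_div_pow h12.symm hh2 hh1 m2 m1 fun _ => by ring]

theorem twoPointLaurent_expansion_general {h f g1 g2 : ℂ → ℂ} (h12 : z1 ≠ z2) {r : ℝ}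
    (hh : DifferentiableOn ℂ h {w | ‖(w - z1) * (w - z2)‖ < r}) (m1 m2 : ℕ)
    (hf : ∀ w, f w = h w / ((w - z1) ^ m1 * (w - z2) ^ m2))
    (hg1 : ∀ w, g1 w = h w / (w - z2) ^ m2) (hg2 : ∀ w, g2 w = h w / (w - z1) ^ m1)
    {z : ℂ} (hz1 : z ≠ z1) (hz2 : z ≠ z2) (hz : ‖(z - z1) * (z - z2)‖ < r) :
    ∃ S1 S2 : ℂ,
      HasSum (fun n : ℕ => (twoPointLaurentB g1 g2 z1 z2 m1 m2 n * (z - z1)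
        + twoPointLaurentB g2 g1 z2 z1 m2 m1 n * (z - z2)) * ((z - z1) * (z - z2)) ^ n) S1 ∧
      HasSum (fun n : ℕ => (twoPointLaurentC g1 g2 z1 z2 m1 m2 n * (z - z1)
        + twoPointLaurentC g2 g1 z2 z1 m2 m1 n * (z - z2)) *
          ((z - z1) * (z - z2)) ^ (-(n : ℤ) - 1)) S2 ∧
      f z = S1 + S2 := by
  obtain rfl := funext hf
  obtain rfl := funext hg1
  obtain rfl := funext hg2
  have hr : 0 < r := (norm_nonneg _).trans_lt hz
  have hg1 := analyticAt_div_sub_pow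
    (analyticAt_of_differentiableOn_norm_mul_lt hr hh (x := z1) (by simp)) h12 m2
  have hg2 := analyticAt_div_sub_pow
    (analyticAt_of_differentiableOn_norm_mul_lt hr hh (x := z2) (by simp)) h12.symm m1
  simp only [twoPointLaurentB_eq_twoPointCoeff h12 hg1 hg2,
    twoPointLaurentB_eq_twoPointCoeff h12.symm hg2 hg1,
    twoPointLaurentC_eq_twoPointCoeff h12 hg1 hg2,
    twoPointLaurentC_eq_twoPointCoeff h12.symm hg2 hg1, neg_add']
  simpa only [zpow_natCast] using
    exists_hasSum_nat_hasSum_neg_sub_one (hasSum_twoPointCoeff h12 hh m1 m2 hz1 hz2 hz)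

end Expansion

/-- Two-point Laurent expansion of `f = h/((z−z1)^{m1}(z−z2)^{m2})`, `h` analytic on `Ω`:
inside the Cassini oval, `f(z)` is the sum of the convergent regular series (coefficients
`b_n`) and the convergent singular series (coefficients `c_n`, only finitely many nonzero). -/
theorem twoPointLaurent_expansion
    (Ω : Set ℂ) (hΩ : IsOpen Ω) (h : ℂ → ℂ) (hh : DifferentiableOn ℂ h Ω)
    (z1 z2 : ℂ) (hz1 : z1 ∈ Ω) (hz2 : z2 ∈ Ω) (h12 : z1 ≠ z2)
    (m1 m2 : ℕ) (hm1 : 1 ≤ m1) (hm2 : 1 ≤ m2)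
    (f g1 g2 : ℂ → ℂ)
    (hfdef : ∀ w, f w = h w / ((w - z1) ^ m1 * (w - z2) ^ m2))
    (hg1def : ∀ w, g1 w = h w / (w - z2) ^ m2)
    (hg2def : ∀ w, g2 w = h w / (w - z1) ^ m1)
    (z : ℂ) (hz : z ∈ Ω) (hzz1 : z ≠ z1) (hzz2 : z ≠ z2)
    (r : ℝ) (hr : ‖(z - z1) * (z - z2)‖ < r)
    (hrΩ : ∀ w : ℂ, w ∉ Ω → r ≤ ‖(w - z1) * (w - z2)‖) :
    ∃ S1 S2 : ℂ,
      Filter.Tendsto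
        (fun N : ℕ => ∑ n ∈ Finset.range N,
          (twoPointLaurentB g1 g2 z1 z2 m1 m2 n * (z - z1)
            + twoPointLaurentB g2 g1 z2 z1 m2 m1 n * (z - z2)) *
            ((z - z1) * (z - z2)) ^ n)
        Filter.atTop (nhds S1) ∧
      Filter.Tendsto
        (fun N : ℕ => ∑ n ∈ Finset.range N,
          (twoPointLaurentC g1 g2 z1 z2 m1 m2 n * (z - z1)
            + twoPointLaurentC g2 g1 z2 z1 m2 m1 n * (z - z2)) *
            ((z - z1) * (z - z2)) ^ (-(n : ℤ) - 1))
        Filter.atTop (nhds S2) ∧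
      f z = S1 + S2 := by
  have hoval : DifferentiableOn ℂ h {w | ‖(w - z1) * (w - z2)‖ < r} :=
    hh.mono fun w hw => by_contra fun hwΩ => (hrΩ w hwΩ).not_gt hw
  obtain ⟨S1, S2, hS1, hS2, hS⟩ := twoPointLaurent_expansion_general h12 hoval m1 m2 hfdef hg1def
    hg2def hzz1 hzz2 hr
  exact ⟨S1, S2, hS1.tendsto_sum_nat, hS2.tendsto_sum_nat, hS⟩
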